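/- For all integers m ≥ 1 and k ≥ 1 there exists a constant C > 0 such that for every integer ν ≥ 1, every open set Ω ⊆ ℝ^m, every bounded k-times continuously differentiable map u : Ω → ℝ^ν, every r > 0 and every x ∈ Ω with the open ball B_r(x) contained in Ω, one has ‖Du(x)‖ ≤ C ( (sup_{Ω}‖u‖)/r + r^{k−1} (M‖D^k u‖)(x) ). -/

import Mathlib

open MeasureTheory Filter Topology ENNReal

/-- The maximal function of `f : Ω → [0,∞]`:
`(Mf)(x) = sup_{r>0} λ(B_r(x))⁻¹ ∫_{Ω ∩ B_r(x)} f`. -/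
noncomputable def maximalFn {m : ℕ} (Ω : Set (EuclideanSpace ℝ (Fin m)))
    (f : EuclideanSpace ℝ (Fin m) → ℝ≥0∞) (x : EuclideanSpace ℝ (Fin m)) : ℝ≥0∞ :=
  ⨆ (r : ℝ) (_ : 0 < r),
    (volume (Metric.ball x r))⁻¹ * ∫⁻ y in Ω ∩ Metric.ball x r, f y

/-!
Let `n = k - 1 ≥ 1` and choose nodes `v i ∈ (0, 1]` and weights `a i` with `∑ a i * v i ^ j` equal
to `1` for `j = 1` and to `0` for the other `j ≤ n`. Combining the Taylor expansions of `u` at `x`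
with increments `v i • y` using these weights leaves only the linear term, so `Du(x) y` is bounded
by `sup ‖u‖` plus `r ^ k` times integrals of `‖D^k u‖` over the segments from `x` to `x + v i • y`.
Averaging over `y ∈ B_r(0)`, Fubini and a dilation turn the segment integrals into averages of
`‖D^k u‖` over balls centred at `x` of radius at most `r`, and the average of `‖L y‖` over `B_r(0)`
controls `r * ‖L‖` for every linear map `L`. For `k = 1` the bound is the continuity of `Du` at `x`.
-/

open Metric Module Set
open scoped Nat NNReal

section Averages

theorem laverage_smul_measure {α : Type*} [MeasurableSpace α] (μ : Measure α) {c : ℝ≥0∞}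
    (hc₀ : c ≠ 0) (hc : c ≠ ∞) (f : α → ℝ≥0∞) : ⨍⁻ y, f y ∂(c • μ) = ⨍⁻ y, f y ∂μ := by
  rw [laverage_eq, laverage_eq, lintegral_smul_measure, Measure.smul_apply, smul_eq_mul,
    smul_eq_mul, ENNReal.mul_div_mul_left _ _ hc₀ hc]

theorem setLAverage_map {α β : Type*} [MeasurableSpace α] [MeasurableSpace β] {g : α → β}
    (hg : MeasurableEmbedding g) (μ : Measure α) (s : Set β) (f : β → ℝ≥0∞) :
    ⨍⁻ z in s, f z ∂(μ.map g) = ⨍⁻ y in g ⁻¹' s, f (g y) ∂μ := by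
  rw [setLAverage_eq, setLAverage_eq, hg.restrict_map, hg.lintegral_map, hg.map_apply]

theorem le_of_forall_setLAverage_ball_le {X : Type*} [PseudoMetricSpace X] [ProperSpace X]
    [MeasurableSpace X] [OpensMeasurableSpace X] (μ : Measure X) [μ.IsOpenPosMeasure]
    [IsFiniteMeasureOnCompacts μ] {f : X → ℝ≥0∞} {x : X} {r : ℝ} {M : ℝ≥0∞} (hr : 0 < r)
    (hf : ContinuousAt f x) (hM : ∀ ρ ∈ Ioc 0 r, ⨍⁻ y in ball x ρ, f y ∂μ ≤ M) : f x ≤ M := by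
  refine le_of_forall_lt_imp_le_of_dense fun c hc ↦ ?_
  obtain ⟨ε, hε, hcf⟩ := Metric.eventually_nhds_iff_ball.1 (hf.eventually_const_lt hc)
  have hρ : 0 < min ε r := lt_min hε hr
  calc c = ⨍⁻ _ in ball x (min ε r), c ∂μ :=
        (setLAverage_const (measure_ball_pos μ x hρ).ne' measure_ball_lt_top.ne c).symm
    _ ≤ ⨍⁻ y in ball x (min ε r), f y ∂μ := by
        rw [setLAverage_eq, setLAverage_eq]
        gcongr ?_ / _
        exact setLIntegral_mono' measurableSet_ball fun y hy ↦
          (hcf y (ball_subset_ball (min_le_left _ _) hy)).le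
    _ ≤ M := hM _ ⟨hρ, min_le_right _ _⟩

variable {E : Type*} [NormedAddCommGroup E] [NormedSpace ℝ E]

theorem preimage_add_smul_ball (x : E) {c : ℝ} (hc : 0 < c) (r : ℝ) :
    (fun y ↦ x + c • y) ⁻¹' ball x (c * r) = ball 0 r := by
  ext y
  simp [norm_smul, abs_of_pos hc, hc]

theorem add_smul_smul_mem_ball {x y : E} {r c t : ℝ} (hc : c ∈ Ioc (0 : ℝ) 1)
    (ht : t ∈ Icc (0 : ℝ) 1) (hy : y ∈ ball 0 r) : x + t • c • y ∈ ball x r := by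
  have htc : ‖t * c‖ ≤ 1 := by
    rw [Real.norm_of_nonneg (mul_nonneg ht.1 hc.1.le)]
    exact mul_le_one₀ ht.2 hc.1.le hc.2
  rw [mem_ball_iff_norm, add_sub_cancel_left, smul_smul, norm_smul]
  exact (mul_le_of_le_one_left (norm_nonneg y) htc).trans_lt (mem_ball_zero_iff.1 hy)

theorem aemeasurable_comp_add_smul_smul [SecondCountableTopology E] [MeasurableSpace E]
    [OpensMeasurableSpace E] (μ : Measure E) [SFinite μ] {f : E → ℝ≥0∞} {x : E} {r c : ℝ}
    (hf : ContinuousOn f (ball x r)) (hc : c ∈ Ioc (0 : ℝ) 1) :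
    AEMeasurable (fun p : E × ℝ ↦ f (x + p.2 • c • p.1))
      ((μ.restrict (ball 0 r)).prod (volume.restrict (Ioc 0 1))) := by
  rw [Measure.prod_restrict]
  refine ContinuousOn.aemeasurable ?_ (measurableSet_ball.prod measurableSet_Ioc)
  exact hf.comp (by fun_prop) fun p hp ↦
    add_smul_smul_mem_ball hc (Ioc_subset_Icc_self hp.2) hp.1

variable [FiniteDimensional ℝ E] [MeasurableSpace E] [BorelSpace E] (μ : Measure E)
  [μ.IsAddHaarMeasure]

theorem map_add_smul_addHaar (x : E) {c : ℝ} (hc : 0 < c) :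
    μ.map (fun y ↦ x + c • y) = ENNReal.ofReal (c ^ finrank ℝ E)⁻¹ • μ := by
  have hcomp : (fun y ↦ x + c • y) = (x + ·) ∘ (c • ·) := rfl
  rw [hcomp, ← Measure.map_map (by fun_prop) (by fun_prop), Measure.map_addHaar_smul μ hc.ne',
    Measure.map_smul, map_add_left_eq_self, abs_of_pos (by positivity)]

theorem setLAverage_ball_comp_add_smul (f : E → ℝ≥0∞) (x : E) {c : ℝ} (hc : 0 < c) (r : ℝ) :
    ⨍⁻ y in ball 0 r, f (x + c • y) ∂μ = ⨍⁻ z in ball x (c * r), f z ∂μ := by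
  have hg : MeasurableEmbedding (fun y ↦ x + c • y) :=
    ((Homeomorph.smulOfNeZero c hc.ne').trans (Homeomorph.addLeft x)).measurableEmbedding
  rw [← preimage_add_smul_ball x hc r, ← setLAverage_map hg, map_add_smul_addHaar μ x hc,
    Measure.restrict_smul,
    laverage_smul_measure _ (by simpa using pow_pos hc _) ENNReal.ofReal_ne_top]

theorem setLAverage_ball_le_of_subset (f : E → ℝ≥0∞) {x z : E} {c r : ℝ} (hc : 0 < c)
    (hsub : ball z r ⊆ ball x (c * r)) :
    ⨍⁻ y in ball z r, f y ∂μ ≤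
      ENNReal.ofReal (c ^ finrank ℝ E) * ⨍⁻ y in ball x (c * r), f y ∂μ := by
  have hvol : μ (ball x (c * r)) = ENNReal.ofReal (c ^ finrank ℝ E) * μ (ball z r) := by
    rw [Measure.addHaar_ball_mul_of_pos μ x hc, Measure.addHaar_ball_center μ z]
  have hcd₀ : ENNReal.ofReal (c ^ finrank ℝ E) ≠ 0 := by simpa using pow_pos hc _
  calc ⨍⁻ y in ball z r, f y ∂μ
      ≤ (∫⁻ y in ball x (c * r), f y ∂μ) / μ (ball z r) := by
        rw [setLAverage_eq]
        gcongr
    _ = ENNReal.ofReal (c ^ finrank ℝ E) * ⨍⁻ y in ball x (c * r), f y ∂μ := by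
        rw [setLAverage_eq, hvol, ← mul_div_assoc,
          ENNReal.mul_div_mul_left _ _ hcd₀ ENNReal.ofReal_ne_top]

theorem setLAverage_ball_lintegral_segment_le {f : E → ℝ≥0∞} {x : E} {r c : ℝ} {M : ℝ≥0∞}
    (hr : 0 < r) (hf : ContinuousOn f (ball x r))
    (hM : ∀ ρ ∈ Ioc 0 r, ⨍⁻ y in ball x ρ, f y ∂μ ≤ M) (hc : c ∈ Ioc (0 : ℝ) 1) :
    ⨍⁻ y in ball 0 r, (∫⁻ t in Ioc (0 : ℝ) 1, f (x + t • c • y)) ∂μ ≤ M := by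
  have hmeas := aemeasurable_comp_add_smul_smul μ hf hc
  have hdilate : ∀ t ∈ Ioc (0 : ℝ) 1, ⨍⁻ y in ball 0 r, f (x + t • c • y) ∂μ ≤ M := by
    intro t ht
    have htc : 0 < t * c := mul_pos ht.1 hc.1
    have htcr : t * c * r ≤ r := mul_le_of_le_one_left hr.le (mul_le_one₀ ht.2 hc.1.le hc.2)
    simp only [smul_smul, setLAverage_ball_comp_add_smul μ f x htc r]
    exact hM _ ⟨by positivity, htcr⟩
  calc ⨍⁻ y in ball 0 r, (∫⁻ t in Ioc (0 : ℝ) 1, f (x + t • c • y)) ∂μ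
      = ∫⁻ t in Ioc (0 : ℝ) 1, ⨍⁻ y in ball 0 r, f (x + t • c • y) ∂μ := by
        simp only [setLAverage_eq']
        rw [lintegral_lintegral_swap]
        rw [Measure.prod_smul_left]
        exact hmeas.smul_measure _
    _ ≤ ∫⁻ _ in Ioc (0 : ℝ) 1, M := setLIntegral_mono' measurableSet_Ioc hdilate
    _ = M := by simp

end Averages

section OperatorNorm

variable {E F : Type*} [NormedAddCommGroup E] [NormedSpace ℝ E] [NormedAddCommGroup F]
  [NormedSpace ℝ F]

theorem opENorm_mul_le_of_forall_mem_ball (L : E →L[ℝ] F) {r : ℝ} (hr : 0 < r) {K : ℝ≥0∞}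
    (hK : ∀ z ∈ ball 0 r, ‖L z‖ₑ ≤ K) : ‖L‖ₑ * ENNReal.ofReal r ≤ K := by
  have hr₀ : ENNReal.ofReal r ≠ 0 := by simpa using hr
  rw [← ENNReal.le_div_iff_mul_le (.inl hr₀) (.inl ENNReal.ofReal_ne_top)]
  refine ENNReal.le_of_forall_nnreal_lt fun s hs ↦ ?_
  obtain ⟨e, he, hse⟩ := L.exists_lt_apply_of_lt_opNNNorm (ENNReal.coe_lt_coe.1 hs)
  have hre : r • e ∈ ball (0 : E) r := by
    rw [mem_ball_zero_iff, norm_smul, Real.norm_of_nonneg hr.le]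
    exact mul_lt_of_lt_one_right hr he
  rw [ENNReal.le_div_iff_mul_le (.inl hr₀) (.inl ENNReal.ofReal_ne_top)]
  calc (s : ℝ≥0∞) * ENNReal.ofReal r ≤ ‖L e‖ₑ * ENNReal.ofReal r := by
        gcongr
        exact ENNReal.coe_le_coe.2 hse.le
    _ = ‖L (r • e)‖ₑ := by rw [map_smul, enorm_smul, Real.enorm_of_nonneg hr.le, mul_comm]
    _ ≤ K := hK _ hre

variable [FiniteDimensional ℝ E] [MeasurableSpace E] [BorelSpace E] (μ : Measure E)
  [μ.IsAddHaarMeasure]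

theorem enorm_apply_le_setLAverage_ball (L : E →L[ℝ] F) {z : E} {r : ℝ} (hz : z ∈ ball 0 r) :
    ‖L z‖ₑ ≤ 2 ^ (finrank ℝ E + 1) * ⨍⁻ y in ball 0 (2 * r), ‖L y‖ₑ ∂μ := by
  have hr : 0 < r := pos_of_mem_ball hz
  have hsub : ∀ w ∈ ball (0 : E) r, ⨍⁻ y in ball w r, ‖L y‖ₑ ∂μ ≤
      2 ^ finrank ℝ E * ⨍⁻ y in ball 0 (2 * r), ‖L y‖ₑ ∂μ := fun w hw ↦ by
    simpa [ENNReal.ofReal_pow] using setLAverage_ball_le_of_subset μ (fun y ↦ ‖L y‖ₑ) two_pos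
      (ball_subset_ball' (by linarith [mem_ball.1 hw]))
  -- `L z = L (z + y) - L y`, averaged over `y`.
  calc ‖L z‖ₑ = ⨍⁻ _ in ball (0 : E) r, ‖L z‖ₑ ∂μ :=
        (setLAverage_const (measure_ball_pos μ 0 hr).ne' measure_ball_lt_top.ne _).symm
    _ ≤ ⨍⁻ y in ball 0 r, (‖L (z + (1 : ℝ) • y)‖ₑ + ‖L y‖ₑ) ∂μ := by
        refine laverage_mono_ae (.of_forall fun y ↦ ?_)
        simpa using enorm_sub_le (a := L (z + y)) (b := L y)
    _ = ⨍⁻ y in ball z r, ‖L y‖ₑ ∂μ + ⨍⁻ y in ball 0 r, ‖L y‖ₑ ∂μ := by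
        rw [laverage_eq', lintegral_add_right _ L.continuous.enorm.measurable, ← laverage_eq',
          ← laverage_eq', setLAverage_ball_comp_add_smul μ (fun y ↦ ‖L y‖ₑ) z one_pos, one_mul]
    _ ≤ 2 ^ finrank ℝ E * ⨍⁻ y in ball 0 (2 * r), ‖L y‖ₑ ∂μ +
          2 ^ finrank ℝ E * ⨍⁻ y in ball 0 (2 * r), ‖L y‖ₑ ∂μ :=
        add_le_add (hsub z hz) (hsub 0 (mem_ball_self hr))
    _ = 2 ^ (finrank ℝ E + 1) * ⨍⁻ y in ball 0 (2 * r), ‖L y‖ₑ ∂μ := by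
        rw [pow_succ, mul_right_comm, mul_two]

theorem opENorm_mul_le_setLAverage_ball (L : E →L[ℝ] F) {r : ℝ} (hr : 0 < r) :
    ‖L‖ₑ * ENNReal.ofReal r ≤ 2 ^ (finrank ℝ E + 2) * ⨍⁻ y in ball 0 r, ‖L y‖ₑ ∂μ := by
  have hr2 : 2 * (r / 2) = r := mul_div_cancel₀ r two_ne_zero
  calc ‖L‖ₑ * ENNReal.ofReal r = 2 * (‖L‖ₑ * ENNReal.ofReal (r / 2)) := by
        rw [mul_left_comm, ← ENNReal.ofReal_ofNat 2, ← ENNReal.ofReal_mul zero_le_two, hr2]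
    _ ≤ 2 * (2 ^ (finrank ℝ E + 1) * ⨍⁻ y in ball 0 (2 * (r / 2)), ‖L y‖ₑ ∂μ) :=
        mul_le_mul_right (opENorm_mul_le_of_forall_mem_ball L (half_pos hr) fun z hz ↦
          enorm_apply_le_setLAverage_ball μ L hz) 2
    _ = 2 ^ (finrank ℝ E + 2) * ⨍⁻ y in ball 0 r, ‖L y‖ₑ ∂μ := by
        rw [hr2, ← mul_assoc, ← pow_succ']

end OperatorNorm

section TaylorExpansion

theorem exists_sum_mul_pow_eq {K : Type*} [Field K] {n : ℕ} {v : Fin n → K}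
    (hv : Function.Injective v) (b : Fin n → K) :
    ∃ a : Fin n → K, ∀ j : Fin n, ∑ i, a i * v i ^ (j : ℕ) = b j := by
  have hunit : IsUnit (Matrix.vandermonde v) :=
    (Matrix.isUnit_iff_isUnit_det _).2 (Matrix.det_vandermonde_ne_zero_iff.2 hv).isUnit
  obtain ⟨a, ha⟩ := Matrix.vecMul_surjective_iff_isUnit.2 hunit b
  exact ⟨a, fun j ↦ congrFun ha j⟩

theorem exists_moments_eq_ite_one (n : ℕ) : ∃ a v : Fin (n + 1) → ℝ, (∀ i, v i ∈ Ioc 0 1) ∧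
    ∀ j ≤ n, ∑ i, a i * v i ^ j = if j = 1 then 1 else 0 := by
  let v : Fin (n + 1) → ℝ := fun i ↦ (i + 1) / (n + 1)
  have hv : Function.Injective v := fun i j hij ↦ by
    simp only [v] at hij
    field_simp at hij
    exact Fin.ext (by simpa using hij)
  obtain ⟨a, ha⟩ := exists_sum_mul_pow_eq hv fun j ↦ if (j : ℕ) = 1 then 1 else 0
  refine ⟨a, v, fun i ↦ ⟨by positivity, ?_⟩, fun j hj ↦ ha ⟨j, Nat.lt_succ_of_le hj⟩⟩
  have hi : (i : ℝ) ≤ n := by exact_mod_cast i.is_le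
  exact (div_le_one (by positivity)).2 (by linarith)

variable {E F : Type*} [NormedAddCommGroup E] [NormedSpace ℝ E] [NormedAddCommGroup F]
  [NormedSpace ℝ F]

/-- The Taylor polynomial of order `n` of `f` at `x`, as a function of the increment `y`. -/
noncomputable def taylorPolynomialAt (f : E → F) (n : ℕ) (x y : E) : F :=
  ∑ j ∈ Finset.range (n + 1), (j ! : ℝ)⁻¹ • iteratedFDeriv ℝ j f x fun _ ↦ y

theorem enorm_apply_const_le {n : ℕ} (T : E [×n]→L[ℝ] F) (y : E) :
    ‖T fun _ ↦ y‖ₑ ≤ ‖T‖ₑ * ‖y‖ₑ ^ n := by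
  have hnorm : ‖T fun _ ↦ y‖ ≤ ‖T‖ * ‖y‖ ^ n := by simpa using T.le_opNorm fun _ ↦ y
  simp only [← ofReal_norm]
  rw [← ENNReal.ofReal_pow (norm_nonneg y), ← ENNReal.ofReal_mul (norm_nonneg T)]
  exact ENNReal.ofReal_le_ofReal hnorm

theorem enorm_sub_taylorPolynomialAt_le [CompleteSpace F] {f : E → F} {n : ℕ} {x y : E}
    (hf : ∀ t ∈ Icc (0 : ℝ) 1, ContDiffAt ℝ (n + 1) f (x + t • y)) :
    ‖f (x + y) - taylorPolynomialAt f n x y‖ₑ ≤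
      ‖y‖ₑ ^ (n + 1) * ∫⁻ t in Ioc (0 : ℝ) 1, ‖iteratedFDeriv ℝ (n + 1) f (x + t • y)‖ₑ := by
  have hfact : ‖(n ! : ℝ)⁻¹‖ₑ ≤ 1 := by
    rw [Real.enorm_of_nonneg (by positivity), ENNReal.ofReal_le_one]
    exact inv_le_one_of_one_le₀ (by exact_mod_cast n.factorial_pos)
  have hkernel : ∀ t ∈ Ioc (0 : ℝ) 1, ‖(1 - t) ^ n‖ₑ ≤ 1 := fun t ht ↦ by
    have h1t : 0 ≤ 1 - t := sub_nonneg.2 ht.2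
    rw [Real.enorm_of_nonneg (pow_nonneg h1t n), ENNReal.ofReal_le_one]
    exact pow_le_one₀ h1t (sub_le_self 1 ht.1.le)
  rw [map_add_eq_sum_add_integral_iteratedFDeriv hf, taylorPolynomialAt, add_sub_cancel_left,
    intervalIntegral.integral_of_le zero_le_one, enorm_smul, ← lintegral_const_mul' _ _ (by simp)]
  refine (mul_le_of_le_one_left' hfact).trans ((enorm_integral_le_lintegral_enorm _).trans ?_)
  refine setLIntegral_mono' measurableSet_Ioc fun t ht ↦ ?_
  rw [enorm_smul, mul_comm (‖y‖ₑ ^ _)]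
  exact (mul_le_of_le_one_left' (hkernel t ht)).trans (enorm_apply_const_le _ y)

theorem sum_smul_taylorPolynomialAt_eq_fderiv {ι : Type*} [Fintype ι] (f : E → F) {n : ℕ}
    (hn : 1 ≤ n) (x y : E) {a v : ι → ℝ}
    (hav : ∀ j ≤ n, ∑ i, a i * v i ^ j = if j = 1 then 1 else 0) :
    ∑ i, a i • taylorPolynomialAt f n x (v i • y) = fderiv ℝ f x y := by
  have hcoeff : ∀ j ≤ n, ∑ i, a i • (j ! : ℝ)⁻¹ • iteratedFDeriv ℝ j f x (fun _ ↦ v i • y) =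
      if j = 1 then fderiv ℝ f x y else 0 := by
    intro j hj
    have hterm : ∀ i, a i • (j ! : ℝ)⁻¹ • iteratedFDeriv ℝ j f x (fun _ ↦ v i • y) =
        (a i * v i ^ j) • (j ! : ℝ)⁻¹ • iteratedFDeriv ℝ j f x (fun _ ↦ y) := fun i ↦ by
      rw [ContinuousMultilinearMap.map_smul_univ, Finset.prod_const, Finset.card_univ,
        Fintype.card_fin, smul_comm _ (v i ^ j), smul_smul]
    simp only [hterm, ← Finset.sum_smul, hav j hj]
    split_ifs with h1
    · subst h1
      simp
    · exact zero_smul _ _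
  simp only [taylorPolynomialAt, Finset.smul_sum]
  rw [Finset.sum_comm, Finset.sum_congr rfl fun j hj ↦ hcoeff j (Finset.mem_range_succ_iff.1 hj),
    Finset.sum_ite_eq' _ 1 fun _ ↦ fderiv ℝ f x y, if_pos (Finset.mem_range_succ_iff.2 hn)]

theorem enorm_fderiv_apply_le_of_moments [CompleteSpace F] {ι : Type*} [Fintype ι] {f : E → F}
    {n : ℕ} (hn : 1 ≤ n) {x y : E} {r : ℝ} {S : ℝ≥0∞} {a v : ι → ℝ}
    (hf : ContDiffOn ℝ (n + 1) f (ball x r)) (hS : ∀ z ∈ ball x r, ‖f z‖ₑ ≤ S)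
    (hv : ∀ i, v i ∈ Ioc 0 1) (hav : ∀ j ≤ n, ∑ i, a i * v i ^ j = if j = 1 then 1 else 0)
    (hy : y ∈ ball 0 r) :
    ‖fderiv ℝ f x y‖ₑ ≤ ∑ i, ‖a i‖ₑ * (S + ENNReal.ofReal r ^ (n + 1) *
      ∫⁻ t in Ioc (0 : ℝ) 1, ‖iteratedFDeriv ℝ (n + 1) f (x + t • v i • y)‖ₑ) := by
  have hseg : ∀ i, ∀ t ∈ Icc (0 : ℝ) 1, x + t • v i • y ∈ ball x r := fun i t ht ↦
    add_smul_smul_mem_ball (hv i) ht hy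
  have hvy : ∀ i, ‖v i • y‖ₑ ≤ ENNReal.ofReal r := fun i ↦ by
    have := hseg i 1 ⟨zero_le_one, le_rfl⟩
    rw [one_smul, mem_ball_iff_norm, add_sub_cancel_left] at this
    rw [← ofReal_norm]
    exact ENNReal.ofReal_le_ofReal this.le
  rw [← sum_smul_taylorPolynomialAt_eq_fderiv f hn x y hav]
  refine (enorm_sum_le _ _).trans (Finset.sum_le_sum fun i _ ↦ ?_)
  rw [enorm_smul]
  gcongr
  calc ‖taylorPolynomialAt f n x (v i • y)‖ₑ
      = ‖f (x + v i • y) - (f (x + v i • y) - taylorPolynomialAt f n x (v i • y))‖ₑ := by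
        rw [_root_.sub_sub_cancel]
    _ ≤ ‖f (x + v i • y)‖ₑ + ‖f (x + v i • y) - taylorPolynomialAt f n x (v i • y)‖ₑ :=
        enorm_sub_le
    _ ≤ S + ENNReal.ofReal r ^ (n + 1) *
          ∫⁻ t in Ioc (0 : ℝ) 1, ‖iteratedFDeriv ℝ (n + 1) f (x + t • v i • y)‖ₑ := by
        gcongr
        · simpa using hS _ (hseg i 1 ⟨zero_le_one, le_rfl⟩)
        · refine (enorm_sub_taylorPolynomialAt_le fun t ht ↦ ?_).trans ?_
          · exact hf.contDiffAt (isOpen_ball.mem_nhds (hseg i t ht))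
          · gcongr
            exact hvy i

end TaylorExpansion

section GradientEstimate

variable {E : Type*} [NormedAddCommGroup E] [NormedSpace ℝ E]

theorem continuousOn_enorm_iteratedFDeriv {F : Type*} [NormedAddCommGroup F] [NormedSpace ℝ F]
    {f : E → F} {n : ℕ} {s : Set E} (hs : IsOpen s) (hf : ContDiffOn ℝ n f s) :
    ContinuousOn (fun y ↦ ‖iteratedFDeriv ℝ n f y‖ₑ) s :=
  continuous_enorm.comp_continuousOn <|
    (hf.continuousOn_iteratedFDerivWithin le_rfl hs.uniqueDiffOn).congr
      (iteratedFDerivWithin_of_isOpen n hs).symm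

variable [FiniteDimensional ℝ E] [MeasurableSpace E] [BorelSpace E] (μ : Measure E)
  [μ.IsAddHaarMeasure]

theorem setLAverage_ball_sum_mul_add_lintegral_segment_le {ι : Type*} [Fintype ι]
    {f : E → ℝ≥0∞} {x : E} {r : ℝ} {b : ι → ℝ≥0∞} {v : ι → ℝ} {S K M : ℝ≥0∞} (hr : 0 < r)
    (hf : ContinuousOn f (ball x r)) (hM : ∀ ρ ∈ Ioc 0 r, ⨍⁻ y in ball x ρ, f y ∂μ ≤ M)
    (hv : ∀ i, v i ∈ Ioc 0 1) :
    ⨍⁻ y in ball 0 r, (∑ i, b i * (S + K * ∫⁻ t in Ioc (0 : ℝ) 1, f (x + t • v i • y))) ∂μ ≤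
      (∑ i, b i) * (S + K * M) := by
  have hmeas : ∀ i, AEMeasurable (fun y ↦ ∫⁻ t in Ioc (0 : ℝ) 1, f (x + t • v i • y))
      ((μ (ball 0 r))⁻¹ • μ.restrict (ball 0 r)) := fun i ↦
    (aemeasurable_comp_add_smul_smul μ hf (hv i)).lintegral_prod_right'.smul_measure _
  have hS : ⨍⁻ _ in ball (0 : E) r, S ∂μ = S :=
    setLAverage_const (measure_ball_pos μ 0 hr).ne' measure_ball_lt_top.ne S
  have hsegment : ∀ i, ⨍⁻ y in ball 0 r, (∫⁻ t in Ioc (0 : ℝ) 1, f (x + t • v i • y)) ∂μ ≤ M :=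
    fun i ↦ setLAverage_ball_lintegral_segment_le μ hr hf hM (hv i)
  simp only [setLAverage_eq'] at hS hsegment ⊢
  rw [lintegral_finsetSum' _ fun i _ ↦ (((hmeas i).const_mul K).const_add S).const_mul (b i),
    Finset.sum_mul]
  gcongr with i
  rw [lintegral_const_mul'' _ (((hmeas i).const_mul K).const_add S),
    lintegral_add_left measurable_const, lintegral_const_mul'' _ (hmeas i), hS]
  gcongr
  exact hsegment i

theorem enorm_fderiv_le_of_moments {F : Type*} [NormedAddCommGroup F] [NormedSpace ℝ F]
    [CompleteSpace F] {ι : Type*} [Fintype ι] {f : E → F} {n : ℕ} (hn : 1 ≤ n) {x : E} {r : ℝ}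
    {S M : ℝ≥0∞} {a v : ι → ℝ} (hr : 0 < r) (hf : ContDiffOn ℝ (n + 1) f (ball x r))
    (hS : ∀ z ∈ ball x r, ‖f z‖ₑ ≤ S)
    (hM : ∀ ρ ∈ Ioc 0 r, ⨍⁻ y in ball x ρ, ‖iteratedFDeriv ℝ (n + 1) f y‖ₑ ∂μ ≤ M)
    (hv : ∀ i, v i ∈ Ioc 0 1) (hav : ∀ j ≤ n, ∑ i, a i * v i ^ j = if j = 1 then 1 else 0) :
    ‖fderiv ℝ f x‖ₑ ≤ 2 ^ (finrank ℝ E + 2) * (∑ i, ‖a i‖ₑ) *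
      (S / ENNReal.ofReal r + ENNReal.ofReal r ^ n * M) := by
  have hr₀ : ENNReal.ofReal r ≠ 0 := by simpa using hr
  have hcont : ContinuousOn (fun y ↦ ‖iteratedFDeriv ℝ (n + 1) f y‖ₑ) (ball x r) :=
    continuousOn_enorm_iteratedFDeriv isOpen_ball (by exact_mod_cast hf)
  have haverage : ⨍⁻ y in ball 0 r, ‖fderiv ℝ f x y‖ₑ ∂μ ≤
      (∑ i, ‖a i‖ₑ) * (S + ENNReal.ofReal r ^ (n + 1) * M) := by
    refine le_trans (laverage_mono_ae ?_)
      (setLAverage_ball_sum_mul_add_lintegral_segment_le μ hr hcont hM hv)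
    exact ae_restrict_of_forall_mem measurableSet_ball fun y hy ↦
      enorm_fderiv_apply_le_of_moments hn hf hS hv hav hy
  rw [← ENNReal.mul_le_mul_iff_left hr₀ ENNReal.ofReal_ne_top]
  calc ‖fderiv ℝ f x‖ₑ * ENNReal.ofReal r
      ≤ 2 ^ (finrank ℝ E + 2) * ((∑ i, ‖a i‖ₑ) * (S + ENNReal.ofReal r ^ (n + 1) * M)) :=
        (opENorm_mul_le_setLAverage_ball μ _ hr).trans (mul_le_mul_right haverage _)
    _ = 2 ^ (finrank ℝ E + 2) * (∑ i, ‖a i‖ₑ) *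
          (S / ENNReal.ofReal r + ENNReal.ofReal r ^ n * M) * ENNReal.ofReal r := by
        rw [mul_assoc _ _ (ENNReal.ofReal r), add_mul,
          ENNReal.div_mul_cancel hr₀ ENNReal.ofReal_ne_top]
        ring

theorem exists_enorm_fderiv_le_of_setLAverage_ball_le.{w} (n : ℕ) :
    ∃ C : ℝ≥0, 0 < C ∧
      ∀ (F : Type w) [NormedAddCommGroup F] [NormedSpace ℝ F] [CompleteSpace F] (f : E → F)
        (x : E) (r : ℝ) (S M : ℝ≥0∞), 0 < r → ContDiffOn ℝ (n + 1) f (ball x r) →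
        (∀ y ∈ ball x r, ‖f y‖ₑ ≤ S) →
        (∀ ρ ∈ Ioc 0 r, ⨍⁻ y in ball x ρ, ‖iteratedFDeriv ℝ (n + 1) f y‖ₑ ∂μ ≤ M) →
        ‖fderiv ℝ f x‖ₑ ≤ C * (S / ENNReal.ofReal r + ENNReal.ofReal r ^ n * M) := by
  rcases Nat.eq_zero_or_pos n with rfl | hn
  · refine ⟨1, one_pos, fun F _ _ _ f x r S M hr hf _ hM ↦ ?_⟩
    have hcont : ContinuousAt (fun y ↦ ‖iteratedFDeriv ℝ 1 f y‖ₑ) x :=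
      (continuousOn_enorm_iteratedFDeriv isOpen_ball (by simpa using hf)).continuousAt
        (ball_mem_nhds x hr)
    have hle : ‖iteratedFDeriv ℝ 1 f x‖ₑ ≤ M := le_of_forall_setLAverage_ball_le μ hr hcont hM
    rw [← ofReal_norm, norm_iteratedFDeriv_one, ofReal_norm] at hle
    simpa using hle.trans le_add_self
  · obtain ⟨a, v, hv, hav⟩ := exists_moments_eq_ite_one n
    refine ⟨2 ^ (finrank ℝ E + 2) * (∑ i, ‖a i‖₊ + 1), by positivity,
      fun F _ _ _ f x r S M hr hf hS hM ↦
        (enorm_fderiv_le_of_moments μ hn hr hf hS hM hv hav).trans ?_⟩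
    push_cast
    gcongr
    exact le_self_add

end GradientEstimate

section MaximalFunction

variable {m : ℕ} {Ω : Set (EuclideanSpace ℝ (Fin m))}

theorem setLAverage_ball_le_maximalFn (f : EuclideanSpace ℝ (Fin m) → ℝ≥0∞)
    {x : EuclideanSpace ℝ (Fin m)} {ρ : ℝ} (hρ : 0 < ρ) (hball : ball x ρ ⊆ Ω) :
    ⨍⁻ y in ball x ρ, f y ∂volume ≤ maximalFn Ω f x := by
  refine le_iSup₂_of_le ρ hρ ?_
  rw [setLAverage_eq, inter_eq_right.2 hball, ENNReal.div_eq_inv_mul]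

theorem enorm_le_ofReal_sSup_norm {α F : Type*} [SeminormedAddCommGroup F] {u : α → F} {s : Set α}
    (hu : Bornology.IsBounded (u '' s)) {y : α} (hy : y ∈ s) :
    ‖u y‖ₑ ≤ ENNReal.ofReal (sSup ((fun y ↦ ‖u y‖) '' s)) := by
  obtain ⟨C, hC⟩ := hu.exists_norm_le
  rw [← ofReal_norm]
  refine ENNReal.ofReal_le_ofReal (le_csSup ⟨C, ?_⟩ (mem_image_of_mem _ hy))
  rintro _ ⟨z, hz, rfl⟩
  exact hC _ (mem_image_of_mem u hz)

end MaximalFunction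

theorem sobolev_representation_maximal_general.{w} (m k : ℕ) (hk : 1 ≤ k) :
    ∃ C : ℝ, 0 < C ∧
      ∀ (F : Type w) [NormedAddCommGroup F] [NormedSpace ℝ F] [CompleteSpace F]
        (Ω : Set (EuclideanSpace ℝ (Fin m))), IsOpen Ω →
      ∀ (u : EuclideanSpace ℝ (Fin m) → F), ContDiffOn ℝ k u Ω → Bornology.IsBounded (u '' Ω) →
      ∀ (r : ℝ), 0 < r → ∀ x ∈ Ω, ball x r ⊆ Ω →
        ENNReal.ofReal ‖fderivWithin ℝ u Ω x‖ ≤ ENNReal.ofReal C *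
          (ENNReal.ofReal (sSup ((fun y ↦ ‖u y‖) '' Ω) / r) + ENNReal.ofReal (r ^ (k - 1)) *
            maximalFn Ω (fun y ↦ ENNReal.ofReal ‖iteratedFDerivWithin ℝ k u Ω y‖) x) := by
  obtain ⟨n, rfl⟩ := Nat.exists_eq_add_of_le' hk
  obtain ⟨C, hC, hestimate⟩ := exists_enorm_fderiv_le_of_setLAverage_ball_le.{0, w}
    (volume : Measure (EuclideanSpace ℝ (Fin m))) n
  refine ⟨C, hC, fun F _ _ _ Ω hΩ u hu hbdd r hr x hx hball ↦ ?_⟩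
  rw [fderivWithin_of_isOpen hΩ hx, ofReal_norm, ENNReal.ofReal_coe_nnreal,
    ENNReal.ofReal_div_of_pos hr, Nat.add_sub_cancel, ENNReal.ofReal_pow hr.le]
  refine hestimate F u x r _ _ hr (by exact_mod_cast hu.mono hball)
    (fun y hy ↦ enorm_le_ofReal_sSup_norm hbdd (hball hy)) fun ρ hρ ↦ ?_
  have hρΩ : ball x ρ ⊆ Ω := (ball_subset_ball hρ.2).trans hball
  have hderiv : EqOn (fun y ↦ ‖iteratedFDeriv ℝ (n + 1) u y‖ₑ)
      (fun y ↦ ENNReal.ofReal ‖iteratedFDerivWithin ℝ (n + 1) u Ω y‖) (ball x ρ) := fun y hy ↦ by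
    simp only [iteratedFDerivWithin_of_isOpen _ hΩ (hρΩ hy), ofReal_norm]
  rw [setLAverage_congr_fun measurableSet_ball hderiv]
  exact setLAverage_ball_le_maximalFn _ hρ.1 hρΩ

/-- Maximal-function form of the Sobolev representation bound (from the proof
of Proposition 3.4). -/
theorem sobolev_representation_maximal (m k : ℕ) (hm : 1 ≤ m) (hk : 1 ≤ k) :
    ∃ C : ℝ, 0 < C ∧ ∀ (ν : ℕ), 1 ≤ ν →
      ∀ (Ω : Set (EuclideanSpace ℝ (Fin m))), IsOpen Ω →
      ∀ (u : EuclideanSpace ℝ (Fin m) → EuclideanSpace ℝ (Fin ν)),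
        ContDiffOn ℝ k u Ω → Bornology.IsBounded (u '' Ω) →
      ∀ (r : ℝ), 0 < r → ∀ x ∈ Ω, Metric.ball x r ⊆ Ω →
        ENNReal.ofReal ‖fderivWithin ℝ u Ω x‖ ≤ ENNReal.ofReal C *
          (ENNReal.ofReal (sSup ((fun y => ‖u y‖) '' Ω) / r)
            + ENNReal.ofReal (r ^ (k - 1)) *
                maximalFn Ω
                  (fun y => ENNReal.ofReal ‖iteratedFDerivWithin ℝ k u Ω y‖) x) := by
  obtain ⟨C, hC, hbound⟩ := sobolev_representation_maximal_general m k hk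
  exact ⟨C, hC, fun ν _ ↦ hbound (EuclideanSpace ℝ (Fin ν))⟩
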